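/- arXiv:2212.13859 — 8 statements merged into one kernel-verified Lean document; each statement's English description precedes it below -/
import Mathlib

section
/- Let k, α, θ ∈ ℝ with sin(4α) ≥ 0, and set A = cos(4α), B = sin(θ). Then Tr(U_YY(k))/2 equals (as a complex number, with real right-hand side coerced to ℂ): (11−A)/16 + cos(2k)·(1+A)/4 + cos(4k)·(1−3A)/16 + sin⁴(k)·((1+A)/2)·(1−2B²) + sin³(k)·cos(k)·2B·√(1−A²). -/
open Matrix Filter Topology

noncomputable def σx : Matrix (Fin 2) (Fin 2) ℂ := !![0, 1; 1, 0]
noncomputable def σy : Matrix (Fin 2) (Fin 2) ℂ := !![0, -Complex.I; Complex.I, 0]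
noncomputable def σz : Matrix (Fin 2) (Fin 2) ℂ := !![1, 0; 0, -1]

/-- Rotation about the x-axis by angle `t`. -/
noncomputable def Rx (t : ℝ) : Matrix (Fin 2) (Fin 2) ℂ :=
  !![(Real.cos (t/2) : ℂ), -Complex.I * Real.sin (t/2);
     -Complex.I * Real.sin (t/2), (Real.cos (t/2) : ℂ)]

/-- Rotation about the y-axis by angle `t`. -/
noncomputable def Ry (t : ℝ) : Matrix (Fin 2) (Fin 2) ℂ :=
  !![(Real.cos (t/2) : ℂ), -(Real.sin (t/2) : ℂ);
     (Real.sin (t/2) : ℂ), (Real.cos (t/2) : ℂ)]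

/-- Rotation about the z-axis by angle `t`. -/
noncomputable def Rz (t : ℝ) : Matrix (Fin 2) (Fin 2) ℂ :=
  !![Complex.exp (-(Complex.I * t) / 2), 0; 0, Complex.exp ((Complex.I * t) / 2)]

/-- Fourier-space shift operator at momentum `κ`. -/
noncomputable def Sh (κ : ℝ) : Matrix (Fin 2) (Fin 2) ℂ :=
  !![Complex.exp (Complex.I * κ), 0; 0, Complex.exp (-(Complex.I * κ))]

/-- The coin operator `Cα`. -/
noncomputable def Calpha (α : ℝ) : Matrix (Fin 2) (Fin 2) ℂ :=
  !![(Real.sin α : ℂ), -Complex.I * Real.cos α;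
     Complex.I * Real.cos α, -(Real.sin α : ℂ)]

/-- The coin operator `Cβ`. -/
noncomputable def Cbeta (α : ℝ) : Matrix (Fin 2) (Fin 2) ℂ :=
  !![-(Real.cos α : ℂ), -Complex.I * Real.sin α;
     -Complex.I * Real.sin α, -(Real.cos α : ℂ)]

/-- The massless homogeneous Y–Y twisted quantum walk unitary at momentum `k`,
coin angle `α` and twist angle `θ`: `U_YY = (W_β · W_α)²` with
`W_α = S(k)·Cα` and `W_β = R_y(−θ)·S(k)·R_y(θ)·Cβ`. -/
noncomputable def UYY (k α θ : ℝ) : Matrix (Fin 2) (Fin 2) ℂ :=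
  (Ry (-θ) * Sh k * Ry θ * Cbeta α * (Sh k * Calpha α)) *
    (Ry (-θ) * Sh k * Ry θ * Cbeta α * (Sh k * Calpha α))

lemma Matrix.trace_mul_self_fin_two {R : Type*} [CommRing R] (M : Matrix (Fin 2) (Fin 2) R) :
    (M * M).trace = M.trace ^ 2 - 2 * M.det := by
  simp only [trace_fin_two, det_fin_two, mul_apply, Fin.sum_univ_two]
  ring

lemma Complex.ofReal_cos_sq_add_sin_sq (t : ℝ) :
    (Real.cos t : ℂ) ^ 2 + (Real.sin t : ℂ) ^ 2 = 1 := by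
  exact_mod_cast Real.cos_sq_add_sin_sq t

lemma det_Ry (t : ℝ) : (Ry t).det = 1 := by
  rw [Ry, det_fin_two_of]
  linear_combination Complex.ofReal_cos_sq_add_sin_sq (t / 2)

lemma det_Sh (κ : ℝ) : (Sh κ).det = 1 := by
  simp [Sh, ← Complex.exp_add]

lemma det_Calpha (α : ℝ) : (Calpha α).det = -1 := by
  rw [Calpha, det_fin_two_of]
  linear_combination -Complex.ofReal_cos_sq_add_sin_sq α +
    (Real.cos α : ℂ) ^ 2 * Complex.I_sq

lemma det_Cbeta (α : ℝ) : (Cbeta α).det = 1 := by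
  rw [Cbeta, det_fin_two_of]
  linear_combination Complex.ofReal_cos_sq_add_sin_sq α -
    (Real.sin α : ℂ) ^ 2 * Complex.I_sq

lemma Sh_eq_cos_sin (κ : ℝ) :
    Sh κ = !![(Real.cos κ : ℂ) + Complex.I * Real.sin κ, 0;
      0, (Real.cos κ : ℂ) - Complex.I * Real.sin κ] := by
  have hpos : Complex.exp (Complex.I * κ) = Real.cos κ + Complex.I * Real.sin κ := by
    rw [mul_comm, Complex.exp_mul_I]
    push_cast
    ring
  have hneg : Complex.exp (-(Complex.I * κ)) = Real.cos κ - Complex.I * Real.sin κ := by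
    rw [show -(Complex.I * κ) = (-κ : ℂ) * Complex.I by ring, Complex.exp_mul_I,
      Complex.cos_neg, Complex.sin_neg]
    push_cast
    ring
  rw [Sh, hpos, hneg]

/-- The shift conjugated by a rotation about the y-axis. -/
lemma Ry_neg_mul_Sh_mul_Ry (k θ : ℝ) :
    Ry (-θ) * Sh k * Ry θ =
      !![(Real.cos k : ℂ) + Complex.I * Real.sin k * Real.cos θ,
          -(Complex.I * Real.sin k * Real.sin θ);
        -(Complex.I * Real.sin k * Real.sin θ),
          (Real.cos k : ℂ) - Complex.I * Real.sin k * Real.cos θ] := by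
  have hcos : (Real.cos θ : ℂ) = (Real.cos (θ / 2) : ℂ) ^ 2 - (Real.sin (θ / 2) : ℂ) ^ 2 := by
    rw [show θ = 2 * (θ / 2) by ring, Real.cos_two_mul', show 2 * (θ / 2) / 2 = θ / 2 by ring]
    push_cast
    rfl
  have hsin : (Real.sin θ : ℂ) = 2 * (Real.sin (θ / 2) : ℂ) * (Real.cos (θ / 2) : ℂ) := by
    rw [show θ = 2 * (θ / 2) by ring, Real.sin_two_mul, show 2 * (θ / 2) / 2 = θ / 2 by ring]
    push_cast
    rfl
  have hone := Complex.ofReal_cos_sq_add_sin_sq (θ / 2)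
  rw [hcos, hsin, Sh_eq_cos_sin, Ry, Ry, neg_div, Real.cos_neg, Real.sin_neg, Complex.ofReal_neg]
  ext i j
  fin_cases i <;> fin_cases j <;>
    simp only [Fin.zero_eta, Fin.mk_one, Fin.isValue, mul_apply, Fin.sum_univ_two, of_apply,
      cons_val', cons_val_zero, cons_val_one, cons_val_fin_one]
  · linear_combination (Real.cos k : ℂ) * hone
  · ring
  · ring
  · linear_combination (Real.cos k : ℂ) * hone

/-- The trace of a half-period `W_β · W_α` is purely imaginary. -/
lemma trace_Wbeta_mul_Walpha (k α θ : ℝ) :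
    (Ry (-θ) * Sh k * Ry θ * Cbeta α * (Sh k * Calpha α)).trace =
      Complex.I * ((2 * Real.sin k ^ 2 * Real.cos (2 * α) * Real.sin θ
        - 2 * Real.sin k * Real.cos k * Real.sin (2 * α) : ℝ) : ℂ) := by
  rw [Ry_neg_mul_Sh_mul_Ry, Sh_eq_cos_sin, Cbeta, Calpha, Real.cos_two_mul', Real.sin_two_mul,
    trace_fin_two]
  simp only [Fin.isValue, mul_apply, Fin.sum_univ_two, of_apply,
    cons_val', cons_val_zero, cons_val_one, cons_val_fin_one]
  push_cast
  have hI : Complex.I ^ 3 = -Complex.I := Complex.I_pow_three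
  ring_nf
  simp only [hI]
  ring

lemma det_Wbeta_mul_Walpha (k α θ : ℝ) :
    (Ry (-θ) * Sh k * Ry θ * Cbeta α * (Sh k * Calpha α)).det = -1 := by
  simp [det_mul, det_Ry, det_Sh, det_Calpha, det_Cbeta]

/-- Closed form of `Tr(U_YY)/2` for the homogeneous Y–Y twisted walk. -/
theorem trace_UYY_div_two (k α θ : ℝ) (h : Real.sin (4*α) ≥ 0) :
    (UYY k α θ).trace / 2 =
      (((11 - Real.cos (4*α)) / 16
        + Real.cos (2*k) * (1 + Real.cos (4*α)) / 4
        + Real.cos (4*k) * (1 - 3 * Real.cos (4*α)) / 16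
        + (Real.sin k)^4 * ((1 + Real.cos (4*α)) / 2) * (1 - 2 * (Real.sin θ)^2)
        + (Real.sin k)^3 * Real.cos k * (2 * Real.sin θ)
            * Real.sqrt (1 - (Real.cos (4*α))^2) : ℝ) : ℂ) := by
  have hsqrt : Real.sqrt (1 - Real.cos (4 * α) ^ 2) = Real.sin (4 * α) := by
    rw [← Real.sin_sq, Real.sqrt_sq h]
  rw [UYY, trace_mul_self_fin_two, trace_Wbeta_mul_Walpha, det_Wbeta_mul_Walpha, mul_pow,
    Complex.I_sq, hsqrt, show 4 * α = 2 * (2 * α) by ring, show 4 * k = 2 * (2 * k) by ring,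
    Real.cos_two_mul (2 * α), Real.sin_two_mul (2 * α), Real.cos_two_mul (2 * k),
    Real.cos_two_mul k]
  simp only [Complex.ofReal_add, Complex.ofReal_sub, Complex.ofReal_mul, Complex.ofReal_div,
    Complex.ofReal_pow, Complex.ofReal_one, Complex.ofReal_ofNat]
  linear_combination
    -2 * (Real.sin k : ℂ) ^ 2 * (Real.cos k : ℂ) ^ 2
        * Complex.ofReal_cos_sq_add_sin_sq (2 * α)
      - (2 * (Real.cos k : ℂ) ^ 2 * (1 - (Real.cos (2 * α) : ℂ) ^ 2)
          + (Real.cos (2 * α) : ℂ) ^ 2 * ((Real.sin k : ℂ) ^ 2 + 1 - (Real.cos k : ℂ) ^ 2))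
        * Complex.ofReal_cos_sq_add_sin_sq k
end

section
/- For all k, α, θ ∈ ℝ, the trace of the homogeneous Y–Y twisted walk unitary is π-periodic in the momentum: Tr(U_YY(k + π)) = Tr(U_YY(k)). In particular the Brillouin zone of the walk is the interval [−π/2, π/2]. -/
open Matrix Filter Topology

theorem Sh_add_pi (κ : ℝ) : Sh (κ + Real.pi) = -Sh κ := by
  have h : Complex.exp (Complex.I * Real.pi) = -1 := by
    rw [mul_comm, Complex.exp_pi_mul_I]
  ext i j
  fin_cases i <;> fin_cases j <;>
    simp [Sh, mul_add, Complex.exp_add, Complex.exp_neg, h]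

theorem UYY_add_pi (k α θ : ℝ) : UYY (k + Real.pi) α θ = UYY k α θ := by
  simp only [UYY, Sh_add_pi, Matrix.mul_neg, Matrix.neg_mul, neg_neg]

/-- The trace of the homogeneous Y–Y twisted walk unitary is π-periodic in the
momentum, so the Brillouin zone is `[−π/2, π/2]`. -/
theorem trace_UYY_pi_periodic (k α θ : ℝ) :
    (UYY (k + Real.pi) α θ).trace = (UYY k α θ).trace := by
  rw [UYY_add_pi]
end

section
/- For all k, α, θ ∈ ℝ, the spectrum of the alternate-twist walk is symmetric in momentum for all values of the parameters: Tr(U_XI(−k)) = Tr(U_XI(k)). -/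
open Matrix Filter Topology

/-- The massless alternate-twist walk unitary at momentum `k`, coin angle `α`
and twist angle `θ`: `U_XI = W_{β2} · W_α · W_{β1} · W_α` with `W_α = S(k)·Cα`,
`W_{β1} = R_x(−θ)·S(k)·R_x(θ)·Cβ` and `W_{β2} = S(k)·Cβ`. -/
noncomputable def UXI (k α θ : ℝ) : Matrix (Fin 2) (Fin 2) ℂ :=
  (Sh k * Cbeta α) * (Sh k * Calpha α) *
    (Rx (-θ) * Sh k * Rx θ * Cbeta α) * (Sh k * Calpha α)

lemma σx_mul_self : σx * σx = 1 := by
  ext i j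
  fin_cases i <;> fin_cases j <;> simp [σx]

lemma σx_mul_Sh (κ : ℝ) : σx * Sh κ = Sh (-κ) * σx := by
  simp [σx, Sh]

lemma σx_mul_Rx (t : ℝ) : σx * Rx t = Rx t * σx := by
  simp [σx, Rx]

lemma σx_mul_Cbeta (α : ℝ) : σx * Cbeta α = Cbeta α * σx := by
  simp [σx, Cbeta]

lemma σx_mul_Calpha (α : ℝ) : σx * Calpha α = -(Calpha α * σx) := by
  simp [σx, Calpha]

/-- Conjugation by `σx` reverses the momentum of the alternate-twist walk. -/
lemma σx_mul_UXI (k α θ : ℝ) : σx * UXI k α θ = UXI (-k) α θ * σx := by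
  have shift (M : Matrix (Fin 2) (Fin 2) ℂ) (κ : ℝ) :
      σx * (Sh κ * M) = Sh (-κ) * (σx * M) := by
    rw [← Matrix.mul_assoc, σx_mul_Sh, Matrix.mul_assoc]
  have rot (M : Matrix (Fin 2) (Fin 2) ℂ) (t : ℝ) :
      σx * (Rx t * M) = Rx t * (σx * M) := by
    rw [← Matrix.mul_assoc, σx_mul_Rx, Matrix.mul_assoc]
  have beta (M : Matrix (Fin 2) (Fin 2) ℂ) :
      σx * (Cbeta α * M) = Cbeta α * (σx * M) := by
    rw [← Matrix.mul_assoc, σx_mul_Cbeta, Matrix.mul_assoc]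
  have alpha (M : Matrix (Fin 2) (Fin 2) ℂ) :
      σx * (Calpha α * M) = -(Calpha α * (σx * M)) := by
    rw [← Matrix.mul_assoc, σx_mul_Calpha, Matrix.neg_mul, Matrix.mul_assoc]
  simp only [UXI, Matrix.mul_assoc, shift, rot, beta, alpha, σx_mul_Calpha,
    Matrix.mul_neg, neg_neg]

/-- The spectrum of the alternate-twist walk is symmetric in momentum for all
parameter values: `Tr U_XI(−k) = Tr U_XI(k)`. -/
theorem trace_UXI_symm (k α θ : ℝ) :
    (UXI (-k) α θ).trace = (UXI k α θ).trace := by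
  calc (UXI (-k) α θ).trace = (UXI (-k) α θ * σx * σx).trace := by
        rw [Matrix.mul_assoc, σx_mul_self, Matrix.mul_one]
    _ = (σx * UXI k α θ * σx).trace := by rw [σx_mul_UXI]
    _ = (UXI k α θ).trace := by
        rw [Matrix.trace_mul_comm, ← Matrix.mul_assoc, σx_mul_self, Matrix.one_mul]
end

section
/- For all α, θ ∈ ℝ, at the edge of the Brillouin zone the alternate-twist walk satisfies Tr(U_XI(π/2))/2 = cos θ (as a complex number, with cos θ coerced to ℂ), independently of the coin angle α. Hence the twist opens a spectral gap of size 2θ at k = ±π/2, removing the Fermion-doubling degeneracy. -/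
open Matrix Filter Topology

/-- At the edge of the Brillouin zone the alternate-twist walk satisfies
`Tr(U_XI(π/2))/2 = cos θ`, independently of the coin angle `α`: the twist
opens a spectral gap removing the Fermion-doubling degeneracy. -/
theorem trace_UXI_at_BZ_edge (α θ : ℝ) :
    (UXI (Real.pi / 2) α θ).trace / 2 = ((Real.cos θ : ℝ) : ℂ) := by
  have hexp : Complex.exp (Complex.I * ((Real.pi / 2 : ℝ) : ℂ)) = Complex.I := by
    rw [mul_comm]
    push_cast
    exact Complex.exp_pi_div_two_mul_I
  have hshift : Sh (Real.pi / 2) = !![Complex.I, 0; 0, -Complex.I] := by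
    rw [Sh, Complex.exp_neg, hexp, Complex.inv_I]
  have hcoin : (Real.cos α : ℂ) ^ 2 + (Real.sin α : ℂ) ^ 2 = 1 := by
    exact_mod_cast Real.cos_sq_add_sin_sq α
  have hdouble : (Real.cos θ : ℂ) = (Real.cos (θ / 2) : ℂ) ^ 2 - (Real.sin (θ / 2) : ℂ) ^ 2 := by
    rw [← Complex.ofReal_pow, ← Complex.ofReal_pow, ← Complex.ofReal_sub, ← Real.cos_two_mul',
      mul_div_cancel₀ θ two_ne_zero]
  rw [UXI, hshift, hdouble, Rx, Rx, Calpha, Cbeta, neg_div, Real.cos_neg, Real.sin_neg,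
    Complex.ofReal_neg]
  generalize (Real.cos α : ℂ) = c, (Real.sin α : ℂ) = s at hcoin ⊢
  generalize (Real.cos (θ / 2) : ℂ) = a, (Real.sin (θ / 2) : ℂ) = b
  simp only [Matrix.mul_fin_two, Matrix.trace_fin_two_of]
  have hI := Complex.I_sq
  generalize Complex.I = i at hI ⊢
  grind
end

section
/- Fix k, α₁, θ₁ ∈ ℝ. For ε > 0 let d0(ε) = Re(Tr(U_XI(k·√ε)))/2, where the walk unitary U_XI is taken with coin angle α = α₁·√ε and twist angle θ = θ₁·√ε. Then lim_{ε→0⁺} (1 − d0(ε))/ε² = (1/2)·k²·(4α₁ + θ₁)². -/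
open Matrix Filter Topology

lemma exp_I_mul_ofReal (κ : ℝ) :
    Complex.exp (Complex.I * κ) = Real.cos κ + Real.sin κ * Complex.I := by
  rw [mul_comm, Complex.exp_mul_I, Complex.ofReal_cos, Complex.ofReal_sin]

lemma exp_neg_I_mul_ofReal (κ : ℝ) :
    Complex.exp (-(Complex.I * κ)) = Real.cos κ - Real.sin κ * Complex.I := by
  have h := exp_I_mul_ofReal (-κ)
  rw [Complex.ofReal_neg, mul_neg, Real.cos_neg, Real.sin_neg] at h
  rw [h, Complex.ofReal_neg]
  ring

/-- The trace of `UXI` as a polynomial in the sines and cosines of `k`, `α` and `θ / 2`,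
homogeneous in each of the three pairs. -/
lemma UXI_trace_re (k α θ : ℝ) {u v c s C S : ℝ} (hu : u = Real.cos k) (hv : v = Real.sin k)
    (hc : c = Real.cos α) (hs : s = Real.sin α) (hC : C = Real.cos (θ / 2))
    (hS : S = Real.sin (θ / 2)) :
    (UXI k α θ).trace.re / 2 =
      (u ^ 2 * (c ^ 2 + s ^ 2) - v ^ 2 * (c ^ 2 - s ^ 2)) *
          (u ^ 2 * (c ^ 2 + s ^ 2) * (C ^ 2 + S ^ 2) -
            v ^ 2 * ((c ^ 2 - s ^ 2) * (C ^ 2 - S ^ 2) + 2 * s * c * (2 * S * C))) +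
        u ^ 2 * v ^ 2 *
          ((c ^ 2 - s ^ 2) * (c ^ 2 + s ^ 2) * (C ^ 2 + S ^ 2) +
            (c ^ 2 + s ^ 2) ^ 2 * (C ^ 2 - S ^ 2) +
            ((c ^ 2 - s ^ 2) ^ 2 - (2 * s * c) ^ 2) * (C ^ 2 + S ^ 2) +
            (c ^ 2 + s ^ 2) *
              ((c ^ 2 - s ^ 2) * (C ^ 2 - S ^ 2) - 2 * s * c * (2 * S * C))) +
        v ^ 4 * (2 * s * c) *
          (2 * s * c * (C ^ 2 - S ^ 2) - (c ^ 2 - s ^ 2) * (2 * S * C)) := by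
  have hn : -θ / 2 = -(θ / 2) := by ring
  simp only [UXI, Sh, Cbeta, Calpha, Rx, exp_I_mul_ofReal, exp_neg_I_mul_ofReal, hn,
    Real.cos_neg, Real.sin_neg, ← hu, ← hv, ← hc, ← hs, ← hC, ← hS, Matrix.mul_fin_two,
    Matrix.trace_fin_two_of, Complex.ofReal_neg]
  simp only [Complex.add_re, Complex.add_im, Complex.sub_re, Complex.sub_im, Complex.mul_re,
    Complex.mul_im, Complex.neg_re, Complex.neg_im, Complex.ofReal_re, Complex.ofReal_im,
    Complex.I_re, Complex.I_im, mul_zero, zero_mul, add_zero,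
    zero_add, sub_zero, zero_sub, mul_one, one_mul, neg_zero, neg_mul, mul_neg, neg_neg]
  ring

/-- `1 - d0` as a sum of squares. -/
lemma one_sub_UXI_trace_re (k α θ : ℝ) :
    1 - (UXI k α θ).trace.re / 2 =
      (Real.sin k ^ 4 * ((Real.cos (2 * α) - Real.cos (2 * α - θ)) ^ 2 +
          (Real.sin (2 * α) - Real.sin (2 * α - θ)) ^ 2) +
        Real.cos k ^ 2 * Real.sin k ^ 2 *
          ((Real.cos (2 * α) + Real.cos (4 * α) - 1 - Real.cos (2 * α - θ)) ^ 2 +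
            (Real.sin (2 * α) + Real.sin (4 * α) - Real.sin (2 * α - θ)) ^ 2)) / 2 := by
  rw [UXI_trace_re k α θ rfl rfl rfl rfl rfl rfl]
  have h4 : 4 * α = 2 * (2 * α) := by ring
  have hC : Real.cos θ = Real.cos (θ / 2) ^ 2 - Real.sin (θ / 2) ^ 2 := by
    rw [← Real.cos_two_mul', mul_div_cancel₀ θ two_ne_zero]
  have hS : Real.sin θ = 2 * Real.sin (θ / 2) * Real.cos (θ / 2) := by
    rw [← Real.sin_two_mul, mul_div_cancel₀ θ two_ne_zero]
  rw [Real.cos_sub, Real.sin_sub, h4, Real.cos_two_mul' (2 * α), Real.sin_two_mul (2 * α)]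
  have e1 := Real.cos_sq_add_sin_sq k
  have e2 := Real.cos_sq_add_sin_sq α
  have e3 := Real.cos_sq_add_sin_sq (θ / 2)
  rw [e2, e3, ← hC, ← hS, ← Real.cos_two_mul', ← Real.sin_two_mul]
  have f2 := Real.cos_sq_add_sin_sq (2 * α)
  have f3 := Real.cos_sq_add_sin_sq θ
  generalize Real.cos (2 * α) = c at *
  generalize Real.sin (2 * α) = s at *
  generalize Real.cos θ = C at *
  generalize Real.sin θ = S at *
  generalize Real.cos k = u at *
  generalize Real.sin k = v at *
  clear e2 e3 hC hS h4
  grind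

lemma tendsto_div_of_hasDerivAt_zero {f : ℝ → ℝ} {f' : ℝ} (hf : HasDerivAt f f' 0)
    (h0 : f 0 = 0) : Tendsto (fun x => f x / x) (𝓝[>] 0) (𝓝 f') := by
  have h := hf.tendsto_slope_zero_right
  simpa [h0, div_eq_inv_mul] using h

lemma tendsto_one_sub_UXI_trace_re_div (k α₁ θ₁ : ℝ) :
    Tendsto (fun x : ℝ => (1 - (UXI (k * x) (α₁ * x) (θ₁ * x)).trace.re / 2) / x ^ 4)
      (𝓝[>] 0) (𝓝 ((1 / 2) * k ^ 2 * (4 * α₁ + θ₁) ^ 2)) := by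
  have hlin (a : ℝ) : HasDerivAt (fun x : ℝ => a * x) a 0 := by
    simpa using (hasDerivAt_id (0 : ℝ)).const_mul a
  have hsin (a : ℝ) : HasDerivAt (fun x : ℝ => Real.sin (a * x)) a 0 := by
    simpa using (hlin a).sin
  have hcos (a : ℝ) : HasDerivAt (fun x : ℝ => Real.cos (a * x)) 0 0 := by
    simpa using (hlin a).cos
  have hv := tendsto_div_of_hasDerivAt_zero (hsin k) (by simp)
  have hP := tendsto_div_of_hasDerivAt_zero
    ((((hcos (2 * α₁)).add (hcos (4 * α₁))).sub_const 1).sub (hcos (2 * α₁ - θ₁))) (by simp)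
  have hQ := tendsto_div_of_hasDerivAt_zero
    (((hsin (2 * α₁)).add (hsin (4 * α₁))).sub (hsin (2 * α₁ - θ₁))) (by simp)
  have hc (a : ℝ) : Tendsto (fun x : ℝ => Real.cos (a * x)) (𝓝[>] 0) (𝓝 1) := by
    simpa using (hcos a).continuousAt.tendsto.mono_left nhdsWithin_le_nhds
  have hs (a : ℝ) : Tendsto (fun x : ℝ => Real.sin (a * x)) (𝓝[>] 0) (𝓝 0) := by
    simpa using (hsin a).continuousAt.tendsto.mono_left nhdsWithin_le_nhds
  have key := (((hv.pow 4).mul ((((hc (2 * α₁)).sub (hc (2 * α₁ - θ₁))).pow 2).add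
    (((hs (2 * α₁)).sub (hs (2 * α₁ - θ₁))).pow 2))).add
    ((((hc k).pow 2).mul (hv.pow 2)).mul ((hP.pow 2).add (hQ.pow 2)))).div_const 2
  refine (key.congr' ?_).trans_eq ?_
  · filter_upwards [self_mem_nhdsWithin] with x hx
    have hx : x ≠ 0 := (Set.mem_Ioi.mp hx).ne'
    rw [one_sub_UXI_trace_re, ← mul_assoc 2, ← mul_assoc 4, ← sub_mul]
    simp only [Pi.add_apply, Pi.sub_apply]
    field_simp
  · congr 1
    ring

open Filter Topology in
/-- Continuous-limit expansion of `d0` for the alternate-twist walk: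
`(1 − d0(ε))/ε² → (1/2)k²(4α₁ + θ₁)²` as `ε → 0⁺`. -/
theorem UXI_d0_continuous_limit (k α₁ θ₁ : ℝ) :
    Tendsto
      (fun ε : ℝ =>
        (1 - (UXI (k * Real.sqrt ε) (α₁ * Real.sqrt ε) (θ₁ * Real.sqrt ε)).trace.re / 2)
          / ε ^ 2)
      (nhdsWithin 0 (Set.Ioi 0))
      (nhds ((1/2) * k ^ 2 * (4 * α₁ + θ₁) ^ 2)) := by
  have hsqrt : Tendsto Real.sqrt (𝓝[>] 0) (𝓝[>] 0) := by
    refine tendsto_nhdsWithin_iff.mpr ⟨?_, ?_⟩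
    · simpa using (Real.continuous_sqrt.tendsto 0).mono_left nhdsWithin_le_nhds
    · filter_upwards [self_mem_nhdsWithin] with x hx using Real.sqrt_pos.mpr hx
  refine ((tendsto_one_sub_UXI_trace_re_div k α₁ θ₁).comp hsqrt).congr' ?_
  filter_upwards [self_mem_nhdsWithin] with ε hε
  have h : Real.sqrt ε ^ 4 = ε ^ 2 := by
    rw [show 4 = 2 * 2 from rfl, pow_mul, Real.sq_sqrt (Set.mem_Ioi.mp hε).le]
  simp only [Function.comp_apply, h]
end

section
/- Fix k, α₁, θ₁ ∈ ℝ. For ε > 0 let d0(ε) = Re(Tr(U_XI(k·√ε)))/2, where the walk unitary U_XI is taken with coin angle α = α₁·√ε and twist angle θ = θ₁·√ε. Then the continuous-limit energy spectrum is linear in k: lim_{ε→0⁺} arccos(d0(ε))/(2ε) = |k|·|2α₁ + θ₁/2|. -/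
open Matrix Filter Topology

lemma Sh_eq (κ : ℝ) :
    Sh κ = !![(Real.cos κ + Real.sin κ * Complex.I : ℂ), 0;
              0, (Real.cos κ - Real.sin κ * Complex.I : ℂ)] := by
  have h₁ : Complex.exp (Complex.I * κ) = Real.cos κ + Real.sin κ * Complex.I := by
    rw [mul_comm, Complex.exp_mul_I, Complex.ofReal_cos, Complex.ofReal_sin]
  have h₂ : Complex.exp (-(Complex.I * κ)) = Real.cos κ - Real.sin κ * Complex.I := by
    rw [show -(Complex.I * κ) = (-κ : ℂ) * Complex.I by ring, Complex.exp_mul_I,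
      Complex.cos_neg, Complex.sin_neg, Complex.ofReal_cos, Complex.ofReal_sin]
    ring
  rw [Sh, h₁, h₂]

/-- The half-trace of the walk as a polynomial in the sines and cosines of `k`, `α`, `θ / 2`. -/
lemma UXI_trace_re_div_two_eq_poly (k α θ x y c s p q : ℝ)
    (hx : Real.cos k = x) (hy : Real.sin k = y) (hc : Real.cos α = c) (hs : Real.sin α = s)
    (hp : Real.cos (θ / 2) = p) (hq : Real.sin (θ / 2) = q) :
    (UXI k α θ).trace.re / 2 =
      x ^ 4 * (c ^ 2 + s ^ 2) ^ 2 * (p ^ 2 + q ^ 2)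
        + x ^ 2 * y ^ 2 * ((p ^ 2 - q ^ 2) * (c ^ 2 + s ^ 2) ^ 2
          + ((c ^ 2 - s ^ 2) ^ 2 - 4 * c ^ 2 * s ^ 2) * (p ^ 2 + q ^ 2)
          - 8 * s * c * p * q * (c ^ 2 + s ^ 2))
        + y ^ 4 * (p ^ 2 - q ^ 2) * (c ^ 2 + s ^ 2) ^ 2 := by
  simp only [UXI, Sh_eq, Rx, Calpha, Cbeta, neg_div, Real.cos_neg, Real.sin_neg,
    hx, hy, hc, hs, hp, hq]
  simp [Matrix.trace_fin_two]
  ring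

lemma one_sub_UXI_trace_re_div_two (k α θ : ℝ) :
    1 - (UXI k α θ).trace.re / 2 =
      2 * (Real.cos k ^ 2 * Real.sin k ^ 2 *
        (Real.sin (θ / 2) ^ 2 + Real.sin (2 * α) ^ 2 + Real.sin (2 * α) * Real.sin θ)
        + Real.sin k ^ 4 * Real.sin (θ / 2) ^ 2) := by
  rw [UXI_trace_re_div_two_eq_poly k α θ _ _ _ _ _ _ rfl rfl rfl rfl rfl rfl,
    show Real.sin θ = 2 * Real.sin (θ / 2) * Real.cos (θ / 2) by
      rw [← Real.sin_two_mul]; ring_nf, Real.sin_two_mul]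
  have hα := Real.sin_sq_add_cos_sq α
  have hk := Real.sin_sq_add_cos_sq k
  have hθ := Real.sin_sq_add_cos_sq (θ / 2)
  grind

lemma Real.arccos_eq_two_mul_arcsin_sqrt (d : ℝ) :
    Real.arccos d = 2 * Real.arcsin (√((1 - d) / 2)) := by
  rcases le_total 1 d with h | h
  · rw [Real.arccos_eq_zero.2 h, Real.sqrt_eq_zero_of_nonpos (by linarith)]
    simp
  rcases le_total d (-1) with h' | h'
  · rw [Real.arccos_of_le_neg_one h', Real.arcsin_of_one_le]
    · ring
    · rw [Real.one_le_sqrt]; linarith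
  · have h₀ := Real.arccos_nonneg d
    have hπ := Real.arccos_le_pi d
    have hsin := Real.sin_half_eq_sqrt h₀ (by linarith)
    rw [Real.cos_arccos h' h] at hsin
    rw [← hsin, Real.arcsin_sin (by linarith) (by linarith)]
    ring

lemma Real.sin_eq_mul_sinc (x : ℝ) : Real.sin x = x * Real.sinc x := by
  rcases eq_or_ne x 0 with rfl | h
  · simp
  · rw [Real.sinc_of_ne_zero h]; field_simp

/-- The arcsine of a quantity asymptotic to `ε * L` is itself asymptotic to `ε * L`. -/
lemma tendsto_arcsin_mul_div {l : Filter ℝ} {g : ℝ → ℝ} {L : ℝ}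
    (hl : Tendsto id l (𝓝 0)) (hne : ∀ᶠ ε in l, ε ≠ 0) (hg : Tendsto g l (𝓝 L)) :
    Tendsto (fun ε => Real.arcsin (ε * g ε) / ε) l (𝓝 L) := by
  have hder : HasDerivAt Real.arcsin 1 0 := by
    simpa using Real.hasDerivAt_arcsin (x := 0) (by norm_num) (by norm_num)
  have hslope : Tendsto (dslope Real.arcsin 0) (𝓝 0) (𝓝 1) := by
    have := (continuousAt_dslope_same.2 hder.differentiableAt).tendsto
    rwa [dslope_same, hder.deriv] at this
  have harg : Tendsto (fun ε => ε * g ε) l (𝓝 0) := by simpa using hl.mul hg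
  have hprod := hg.mul (hslope.comp harg)
  rw [mul_one] at hprod
  refine hprod.congr' ?_
  filter_upwards [hne] with ε hε
  have h := sub_smul_dslope Real.arcsin 0 (ε * g ε)
  simp only [sub_zero, Real.arcsin_zero, smul_eq_mul] at h
  rw [← h, Function.comp_apply]
  field_simp

open Filter Topology in
/-- Continuous-limit energy spectrum of the alternate-twist walk is linear in
momentum: `arccos(d0(ε))/(2ε) → |k|·|2α₁ + θ₁/2|` as `ε → 0⁺`. -/
theorem UXI_spectrum_continuous_limit (k α₁ θ₁ : ℝ) :
    Tendsto
      (fun ε : ℝ =>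
        Real.arccos
          ((UXI (k * Real.sqrt ε) (α₁ * Real.sqrt ε) (θ₁ * Real.sqrt ε)).trace.re / 2)
          / (2 * ε))
      (nhdsWithin 0 (Set.Ioi 0))
      (nhds (|k| * |2 * α₁ + θ₁ / 2|)) := by
  let G : ℝ → ℝ := fun t =>
    Real.cos (k * t) ^ 2 * (k * Real.sinc (k * t)) ^ 2 *
      ((θ₁ / 2 * Real.sinc (θ₁ * t / 2)) ^ 2 + (2 * α₁ * Real.sinc (2 * (α₁ * t))) ^ 2
        + 2 * α₁ * Real.sinc (2 * (α₁ * t)) * (θ₁ * Real.sinc (θ₁ * t)))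
      + t ^ 2 * ((k * Real.sinc (k * t)) ^ 4 * (θ₁ / 2 * Real.sinc (θ₁ * t / 2)) ^ 2)
  have hG : Continuous fun ε : ℝ => √(G √ε) := by
    have := Real.continuous_sinc
    fun_prop
  have hG₀ : √(G √0) = |k| * |2 * α₁ + θ₁ / 2| := by
    rw [← abs_mul, ← Real.sqrt_sq_eq_abs]
    congr 1
    simp [G]
    ring
  have hlim : Tendsto (fun ε : ℝ => √(G √ε)) (𝓝[>] 0) (𝓝 (|k| * |2 * α₁ + θ₁ / 2|)) :=
    hG₀ ▸ hG.continuousWithinAt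
  refine (tendsto_arcsin_mul_div (tendsto_id.mono_left nhdsWithin_le_nhds)
    (eventually_mem_nhdsWithin.mono fun ε hε => ne_of_gt hε) hlim).congr' ?_
  filter_upwards [self_mem_nhdsWithin] with ε (hε : 0 < ε)
  have hF : (1 - (UXI (k * √ε) (α₁ * √ε) (θ₁ * √ε)).trace.re / 2) / 2 = ε ^ 2 * G √ε := by
    have hsq : ε = √ε ^ 2 := (Real.sq_sqrt hε.le).symm
    rw [one_sub_UXI_trace_re_div_two]
    generalize √ε = t at hsq ⊢
    simp only [Real.sin_eq_mul_sinc, G, hsq]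
    ring
  rw [Real.arccos_eq_two_mul_arcsin_sqrt, hF, Real.sqrt_mul (sq_nonneg ε), Real.sqrt_sq hε.le]
  exact (mul_div_mul_left _ _ two_ne_zero).symm
end

section
/- Let δα, θα0, φα, ζα, δβ, θβ0, φβ, ζβ ∈ ℝ and suppose there exist integers ℓ, p, q, r, s such that δβ = −δα + π/2 + ℓ·π, θβ0 = (−1)^r·θα0 + π + 2p·π, ζβ = φα + (r+1)·π + 2q·π, and φβ = −ζα + (r+1)·π + 2s·π. Then the zeroth-order walk operator G⁰ = C(δβ, θβ0, φβ, ζβ) · C(δα, θα0, φα, ζα) equals σy or −σy; in particular (G⁰)² = 1. -/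
open Matrix Filter Topology

/-- The general coin operator `C(δ,θ,φ,ζ) = e^{iδ}·R_z(ζ)·R_y(θ)·R_z(φ)`. -/
noncomputable def coin (δ θ φ ζ : ℝ) : Matrix (Fin 2) (Fin 2) ℂ :=
  Complex.exp (Complex.I * δ) • (Rz ζ * Ry θ * Rz φ)

theorem Rz_zero : Rz 0 = 1 := by
  simp [Rz, Matrix.one_fin_two]

theorem Rz_mul_Rz (a b : ℝ) : Rz a * Rz b = Rz (a + b) := by
  simp only [Rz, Matrix.mul_fin_two, mul_zero, zero_mul, add_zero, zero_add, ← Complex.exp_add]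
  push_cast
  ring_nf

theorem Ry_mul_Ry (a b : ℝ) : Ry a * Ry b = Ry (a + b) := by
  simp only [Ry, Matrix.mul_fin_two, add_div, Real.cos_add, Real.sin_add]
  push_cast
  ring_nf

theorem Rz_add_int_mul_two_pi (t : ℝ) (n : ℤ) :
    Rz (t + 2 * n * Real.pi) = (-1 : ℂ) ^ n • Rz t := by
  have hneg : -(Complex.I * ((t + 2 * n * Real.pi : ℝ) : ℂ)) / 2 =
      -(Complex.I * t) / 2 - n * (Real.pi * Complex.I) := by
    push_cast; ring
  have hpos : Complex.I * ((t + 2 * n * Real.pi : ℝ) : ℂ) / 2 =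
      Complex.I * t / 2 + n * (Real.pi * Complex.I) := by
    push_cast; ring
  have hinv : ((-1 : ℂ) ^ n)⁻¹ = (-1) ^ n := by
    rw [← _root_.inv_zpow]; norm_num
  simp only [Rz, hneg, hpos, Complex.exp_add, Complex.exp_sub, Complex.exp_int_mul,
    Complex.exp_pi_mul_I, div_eq_mul_inv _ ((-1 : ℂ) ^ n), hinv]
  ext i j
  fin_cases i <;> fin_cases j <;> simp [mul_comm]

theorem Ry_add_int_mul_two_pi (t : ℝ) (n : ℤ) :
    Ry (t + 2 * n * Real.pi) = (-1 : ℂ) ^ n • Ry t := by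
  have h : (t + 2 * n * Real.pi) / 2 = t / 2 + n * Real.pi := by ring
  simp only [Ry, h, Real.cos_add_int_mul_pi, Real.sin_add_int_mul_pi]
  ext i j
  fin_cases i <;> fin_cases j <;> simp

theorem Ry_pi_mul_Rz (t : ℝ) : Ry Real.pi * Rz t = Rz (-t) * Ry Real.pi := by
  ext i j
  fin_cases i <;> fin_cases j <;> simp [Ry, Rz, Matrix.mul_apply]

theorem Rz_pi_mul_Ry (t : ℝ) : Rz Real.pi * Ry t = Ry (-t) * Rz Real.pi := by
  have hpos : Complex.exp (Complex.I * Real.pi / 2) = Complex.I := by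
    rw [mul_comm, mul_div_right_comm, Complex.exp_pi_div_two_mul_I]
  have hneg : Complex.exp (-(Complex.I * Real.pi) / 2) = -Complex.I := by
    rw [neg_div, Complex.exp_neg, hpos, Complex.inv_I]
  simp only [Ry, Rz, hpos, hneg, Matrix.mul_fin_two, neg_div 2 t, Real.cos_neg, Real.sin_neg]
  push_cast
  ring_nf

/-- A rotation by `n * π` about the z-axis reverses the y-axis exactly when `n` is odd. -/
theorem Rz_int_mul_pi_mul_Ry (n : ℤ) (t : ℝ) :
    Rz (n * Real.pi) * Ry t = Ry ((-1 : ℝ) ^ n * t) * Rz (n * Real.pi) := by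
  obtain ⟨k, rfl | rfl⟩ := n.even_or_odd'
  · have h : ((2 * k : ℤ) : ℝ) * Real.pi = 0 + 2 * k * Real.pi := by push_cast; ring
    rw [h, Rz_add_int_mul_two_pi, Rz_zero, (even_two_mul k).neg_one_zpow]
    simp
  · have h : ((2 * k + 1 : ℤ) : ℝ) * Real.pi = Real.pi + 2 * k * Real.pi := by push_cast; ring
    rw [h, Rz_add_int_mul_two_pi, (odd_two_mul_add_one k).neg_one_zpow, Matrix.smul_mul,
      Rz_pi_mul_Ry, Matrix.mul_smul, neg_one_mul]

/-- The half-turned, axis-conjugated rotation collapses to a half turn about the y-axis. -/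
theorem Rz_mul_Ry_mul_Rz_mul_Ry_mul_Rz (r : ℤ) (t φ : ℝ) :
    Rz (φ + (r + 1) * Real.pi) * Ry ((-1 : ℝ) ^ r * t + Real.pi) *
      (Rz ((r + 1) * Real.pi) * Ry t) * Rz φ = Ry Real.pi := by
  have hflip := Rz_int_mul_pi_mul_Ry (r + 1) t
  push_cast at hflip
  have hsign : (-1 : ℝ) ^ r * t + Real.pi + (-1) ^ (r + 1) * t = Real.pi := by
    rw [zpow_add_one₀ (by norm_num)]; ring
  have hzero : φ + (r + 1) * Real.pi + -((r + 1) * Real.pi + φ) = 0 := by ring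
  rw [hflip]
  calc _ = Rz (φ + (r + 1) * Real.pi) *
        ((Ry ((-1 : ℝ) ^ r * t + Real.pi) * Ry ((-1) ^ (r + 1) * t)) *
          (Rz ((r + 1) * Real.pi) * Rz φ)) := by simp only [Matrix.mul_assoc]
    _ = Ry Real.pi := by
      rw [Ry_mul_Ry, hsign, Rz_mul_Rz, Ry_pi_mul_Rz, ← Matrix.mul_assoc, Rz_mul_Rz, hzero,
        Rz_zero, Matrix.one_mul]

theorem coin_mul_coin (δ θ φ ζ δ' θ' φ' ζ' : ℝ) :
    coin δ θ φ ζ * coin δ' θ' φ' ζ' =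
      Complex.exp (Complex.I * (δ + δ' : ℝ)) •
        (Rz ζ * Ry θ * (Rz (φ + ζ') * Ry θ') * Rz φ') := by
  simp only [coin, Matrix.smul_mul, Matrix.mul_smul, smul_smul, ← Complex.exp_add,
    ← Rz_mul_Rz, Matrix.mul_assoc]
  push_cast
  ring_nf

theorem exp_I_mul_pi_div_two_add_int_mul_pi (l : ℤ) :
    Complex.exp (Complex.I * (Real.pi / 2 + l * Real.pi : ℝ)) = (-1) ^ l * Complex.I := by
  have h : Complex.I * ((Real.pi / 2 + l * Real.pi : ℝ) : ℂ) =
      l * (Real.pi * Complex.I) + Real.pi / 2 * Complex.I := by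
    push_cast; ring
  rw [h, Complex.exp_add, Complex.exp_int_mul, Complex.exp_pi_mul_I,
    Complex.exp_pi_div_two_mul_I]

theorem I_smul_Ry_pi : Complex.I • Ry Real.pi = σy := by
  ext i j
  fin_cases i <;> fin_cases j <;> simp [Ry, σy]

theorem σy_mul_σy : σy * σy = 1 := by
  simp [σy, Matrix.one_fin_two]

/-- Under the parameter constraints of the homogeneous Y-twist theorem, the
zeroth-order walk operator `G⁰ = Cβ⁰ · Cα⁰` equals `±σy`; in particular it
squares to the identity. -/
theorem G0_eq_pm_sigma_y (δα θα0 φα ζα δβ θβ0 φβ ζβ : ℝ)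
    (h : ∃ l p q r s : ℤ,
      δβ = -δα + Real.pi / 2 + l * Real.pi ∧
      θβ0 = (-1 : ℝ) ^ r * θα0 + Real.pi + 2 * p * Real.pi ∧
      ζβ = φα + (r + 1) * Real.pi + 2 * q * Real.pi ∧
      φβ = -ζα + (r + 1) * Real.pi + 2 * s * Real.pi) :
    (coin δβ θβ0 φβ ζβ * coin δα θα0 φα ζα = σy ∨
      coin δβ θβ0 φβ ζβ * coin δα θα0 φα ζα = -σy) ∧
    (coin δβ θβ0 φβ ζβ * coin δα θα0 φα ζα) *
      (coin δβ θβ0 φβ ζβ * coin δα θα0 φα ζα) = 1 := by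
  obtain ⟨l, p, q, r, s, rfl, rfl, rfl, rfl⟩ := h
  have hδ : -δα + Real.pi / 2 + l * Real.pi + δα = Real.pi / 2 + l * Real.pi := by ring
  have hφ : -ζα + (r + 1) * Real.pi + 2 * s * Real.pi + ζα =
      (r + 1) * Real.pi + 2 * s * Real.pi := by ring
  have key : coin (-δα + Real.pi / 2 + l * Real.pi)
      ((-1 : ℝ) ^ r * θα0 + Real.pi + 2 * p * Real.pi)
      (-ζα + (r + 1) * Real.pi + 2 * s * Real.pi)
      (φα + (r + 1) * Real.pi + 2 * q * Real.pi) * coin δα θα0 φα ζα =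
      (-1 : ℂ) ^ (l + s + p + q) • σy := by
    rw [coin_mul_coin, hδ, hφ, exp_I_mul_pi_div_two_add_int_mul_pi]
    simp only [Rz_add_int_mul_two_pi, Ry_add_int_mul_two_pi, Matrix.smul_mul, Matrix.mul_smul]
    rw [Rz_mul_Ry_mul_Rz_mul_Ry_mul_Rz, ← I_smul_Ry_pi]
    simp only [smul_smul, zpow_add₀ (neg_ne_zero.mpr (one_ne_zero' ℂ))]
    congr 1
    ring
  rw [key]
  obtain hn | hn := (l + s + p + q).even_or_odd
  · simp [hn.neg_one_zpow, σy_mul_σy]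
  · simp [hn.neg_one_zpow, σy_mul_σy]
end

section
/- Let δ, θ0, φ, ζ ∈ ℝ, let C = C(δ,θ0,φ,ζ) be the general coin operator, and let K = C⁻¹·σz·C. Then the anticommutator σy·K + K·σy is the zero matrix if and only if sin(φ)·sin(θ0) = 0. -/
open Matrix Filter Topology

/-- The determinant of the coin operator is `e^{2iδ}`. -/
theorem det_coin (δ θ φ ζ : ℝ) :
    (coin δ θ φ ζ).det = Complex.exp (Complex.I * δ) ^ 2 := by
  have hRz (t : ℝ) : (Rz t).det = 1 := by
    rw [Rz, det_fin_two_of, ← Complex.exp_add]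
    ring_nf
    simp
  have hRy : (Ry θ).det = 1 := by
    rw [Ry, det_fin_two_of]
    norm_cast
    linear_combination Real.cos_sq_add_sin_sq (θ / 2)
  simp [coin, det_mul, hRz, hRy]

/-- `Rz t` commutes with `σz`. -/
theorem σz_mul_Rz (t : ℝ) : σz * Rz t = Rz t * σz := by
  simp [σz, Rz]

/-- Pulling `σz` through a rotation about the y-axis. -/
theorem σz_mul_Ry (t : ℝ) :
    σz * Ry t = Ry t * !![(Real.cos t : ℂ), -(Real.sin t : ℂ);
      -(Real.sin t : ℂ), -(Real.cos t : ℂ)] := by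
  obtain ⟨s, rfl⟩ : ∃ s, t = 2 * s := ⟨t / 2, by ring⟩
  have h : (Complex.sin s) ^ 2 + Complex.cos s ^ 2 = 1 := Complex.sin_sq_add_cos_sq s
  ext i j
  fin_cases i <;> fin_cases j <;>
    simp [σz, Ry, Complex.cos_two_mul, Complex.sin_two_mul] <;> grind

/-- Pulling the reflection `Ry (-θ) * σz * Ry θ` through a rotation about the z-axis. -/
theorem reflection_mul_Rz (a b : ℂ) (t : ℝ) :
    !![a, b; b, -a] * Rz t =
      Rz t * !![a, b * Complex.exp (Complex.I * t); b * Complex.exp (-(Complex.I * t)), -a] := by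
  have h₁ : Complex.exp (-(Complex.I * t) / 2) * Complex.exp (Complex.I * t) =
      Complex.exp (Complex.I * t / 2) := by
    rw [← Complex.exp_add]
    ring_nf
  have h₂ : Complex.exp (Complex.I * t / 2) * Complex.exp (-(Complex.I * t)) =
      Complex.exp (-(Complex.I * t) / 2) := by
    rw [← Complex.exp_add]
    ring_nf
  ext i j
  fin_cases i <;> fin_cases j <;> simp [Rz] <;> grind

/-- Explicit form of `C⁻¹ * σz * C` for the general coin operator `C`. -/
theorem coin_inv_mul_σz_mul_coin (δ θ φ ζ : ℝ) :
    (coin δ θ φ ζ)⁻¹ * σz * coin δ θ φ ζ =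
      !![(Real.cos θ : ℂ), -(Real.sin θ : ℂ) * Complex.exp (Complex.I * φ);
        -(Real.sin θ : ℂ) * Complex.exp (-(Complex.I * φ)), -(Real.cos θ : ℂ)] := by
  have hdet : IsUnit (coin δ θ φ ζ).det := by
    rw [det_coin]
    exact (pow_ne_zero 2 (Complex.exp_ne_zero _)).isUnit
  suffices h : σz * coin δ θ φ ζ = coin δ θ φ ζ * _ by
    rw [Matrix.mul_assoc, h, nonsing_inv_mul_cancel_left _ _ hdet]
  rw [coin, Matrix.mul_smul, Matrix.smul_mul, Matrix.mul_assoc (_ * _) _ (of _),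
    ← reflection_mul_Rz, ← Matrix.mul_assoc (_ * _), Matrix.mul_assoc (Rz ζ) (Ry θ) (of _),
    ← σz_mul_Ry]
  simp only [← Matrix.mul_assoc, σz_mul_Rz]

/-- The anticommutator of `σy` with a traceless matrix is scalar. -/
theorem anticommutator_σy (a b c : ℂ) :
    σy * !![a, b; c, -a] + !![a, b; c, -a] * σy =
      (Complex.I * (b - c)) • (1 : Matrix (Fin 2) (Fin 2) ℂ) := by
  ext i j
  fin_cases i <;> fin_cases j <;> simp [σy] <;> ring

/-- For `K = C⁻¹·σz·C` with `C` the general coin operator, the anticommutator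
`σy·K + K·σy` vanishes iff `sin φ · sin θ0 = 0`. -/
theorem anticommutator_sigma_y_K_eq_zero_iff (δ θ0 φ ζ : ℝ) :
    σy * ((coin δ θ0 φ ζ)⁻¹ * σz * coin δ θ0 φ ζ) +
        ((coin δ θ0 φ ζ)⁻¹ * σz * coin δ θ0 φ ζ) * σy = 0 ↔
      Real.sin φ * Real.sin θ0 = 0 := by
  have h : Complex.I * (-(Real.sin θ0 : ℂ) * Complex.exp (Complex.I * φ) -
      -(Real.sin θ0 : ℂ) * Complex.exp (-(Complex.I * φ))) =
      ((2 * (Real.sin φ * Real.sin θ0) : ℝ) : ℂ) := by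
    push_cast
    have hsin := Complex.two_sin (φ : ℂ)
    rw [neg_mul, mul_comm (φ : ℂ)] at hsin
    linear_combination -(Complex.sin θ0) * hsin
  rw [coin_inv_mul_σz_mul_coin, anticommutator_σy, h, smul_eq_zero_iff_left one_ne_zero]
  norm_cast
  simp
end
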